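/- arXiv:1602.02961 — 2 statements merged into one kernel-verified Lean document; each statement's English description precedes it below -/
import Mathlib

section
/- Let N ≥ 3, Ω ⊆ ℝ^N an open set, and ψ : Ω → ℝ a smooth function such that the gradient field u = ∇ψ satisfies the kinetic formulation. Assume that for some α ∈ ℝ, |∇ψ(x)| ≠ 0 for every x in the level set {x ∈ Ω : ψ(x) = α}, and let S be a connected component of this level set. Then every point x ∈ S is an umbilical point of the hypersurface S: there exists λ = λ(x) ∈ ℝ such that for every tangent vector w ∈ ℝ^N with w·∇ψ(x) = 0, the derivative at x of the Gauss map v = ∇ψ/|∇ψ| satisfies Dv(x) w = λ w. -/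
open MeasureTheory Metric Set Filter
open scoped RealInnerProductSpace ENNReal Topology

noncomputable section

/-- `χ(x, ξ) = 1` if `u(x)·ξ > 0` and `0` otherwise. -/
def chi {N : ℕ} (u : EuclideanSpace ℝ (Fin N) → EuclideanSpace ℝ (Fin N))
    (x ξ : EuclideanSpace ℝ (Fin N)) : ℝ :=
  if 0 < ⟪u x, ξ⟫ then 1 else 0

/-- The kinetic formulation: for every unit direction `ξ`, every `v ⊥ ξ` and every
test function `φ ∈ C_c^∞(Ω)`, `∫_Ω χ(x,ξ) (v·∇φ(x)) dx = 0`. -/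
def KineticFormulation {N : ℕ} (Ω : Set (EuclideanSpace ℝ (Fin N)))
    (u : EuclideanSpace ℝ (Fin N) → EuclideanSpace ℝ (Fin N)) : Prop :=
  ∀ ξ : EuclideanSpace ℝ (Fin N), ‖ξ‖ = 1 →
    ∀ v : EuclideanSpace ℝ (Fin N), ⟪v, ξ⟫ = 0 →
      ∀ φ : EuclideanSpace ℝ (Fin N) → ℝ, ContDiff ℝ (⊤ : ℕ∞) φ → HasCompactSupport φ →
        tsupport φ ⊆ Ω →
        ∫ x in Ω, chi u x ξ * ⟪v, gradient φ x⟫ = 0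

/-- `x₀` is a Lebesgue point of `f` with value `f₀`. -/
def IsLebesguePoint {E : Type*} [MeasureSpace E] [PseudoMetricSpace E]
    {F : Type*} [NormedAddCommGroup F]
    (f : E → F) (x₀ : E) (f₀ : F) : Prop :=
  Tendsto (fun r : ℝ => ⨍ x in Metric.ball x₀ r, ‖f x - f₀‖) (𝓝[>] 0) (𝓝 0)

/-!
If `u x · ξ = 0`, the sets `{u · ξ > 0}` rescaled about `x` converge to the half-space
`{z | Du(x) z · ξ > 0}`. The kinetic formulation passes to this limit and says that the half-space
is invariant under translations by every `v ⊥ ξ`; hence `Du(x) v · ξ = 0` whenever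
`ξ ⊥ u x` and `v ⊥ ξ`. So the tangential part of `Du(x)` maps every tangent vector `v` into
`(v^⊥)^⊥ = ℝ v`: it preserves all lines of the tangent space, and is therefore a multiple of the
identity. Up to the factor `1 / |u x|`, it is the derivative of `u / |u|`.
-/

open ContinuousLinearMap (lsmul)
open scoped Convolution

theorem eventually_mapsTo_add_smul {E : Type*} [NormedAddCommGroup E] [NormedSpace ℝ E]
    {x : E} {Ω K : Set E} (hK : IsCompact K) (hΩ : Ω ∈ 𝓝 x) :
    ∀ᶠ r : ℝ in 𝓝 0, MapsTo (fun z => x + r • z) K Ω := by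
  refine hK.eventually_forall_of_forall_eventually fun z _ => ?_
  have hcont : ContinuousAt (fun p : ℝ × E => x + p.1 • p.2) (0, z) := by fun_prop
  exact hcont.eventually_mem (by simpa using hΩ)

section WeakLineDeriv

variable {E F : Type*} [NormedAddCommGroup E] [NormedSpace ℝ E] [MeasurableSpace E]
  [NormedAddCommGroup F] [NormedSpace ℝ F] {μ : Measure E} {f g : E → F} {v x : E} {Ω : Set E}

theorem setIntegral_fderiv_smul_of_tsupport_subset {φ : E → ℝ} {s : Set E}
    (hs : tsupport φ ⊆ s) (f : E → F) :
    ∫ x in s, fderiv ℝ φ x v • f x ∂μ = ∫ x, fderiv ℝ φ x v • f x ∂μ :=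
  setIntegral_eq_integral_of_forall_compl_eq_zero fun x hx => by
    simp [fderiv_of_notMem_tsupport ℝ fun h => hx (hs h)]

/-- `∂_v f = 0` on the open set `Ω` in the sense of distributions, for a `μ`-locally integrable
`f`. The integral is over the whole space because the test functions are supported in `Ω`. -/
def HasZeroWeakLineDerivOn (μ : Measure E) (f : E → F) (v : E) (Ω : Set E) : Prop :=
  ∀ φ : E → ℝ, ContDiff ℝ (⊤ : ℕ∞) φ → HasCompactSupport φ → tsupport φ ⊆ Ω →
    ∫ x, fderiv ℝ φ x v • f x ∂μ = 0

namespace HasZeroWeakLineDerivOn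

theorem smul_right (hf : HasZeroWeakLineDerivOn μ f v Ω) (c : ℝ) :
    HasZeroWeakLineDerivOn μ f (c • v) Ω := by
  intro φ hφ hφc hφΩ
  simp only [map_smul, smul_assoc, integral_smul, hf φ hφ hφc hφΩ, smul_zero]

variable [BorelSpace E] [FiniteDimensional ℝ E] [μ.IsAddHaarMeasure]

theorem comp_add_smul (hf : HasZeroWeakLineDerivOn μ f v Ω) (x : E) {r : ℝ} (hr : r ≠ 0) :
    HasZeroWeakLineDerivOn μ (fun z => f (x + r • z)) v ((fun z => x + r • z) ⁻¹' Ω) := by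
  intro φ hφ hφc hφΩ
  let e : E ≃ₜ E := (Homeomorph.smulOfNeZero r hr).trans (Homeomorph.addLeft x)
  have hesymm : ContDiff ℝ (⊤ : ℕ∞) e.symm :=
    contDiff_const.smul (contDiff_const.add contDiff_id)
  let φ' : E → ℝ := φ ∘ e.symm
  have hφ' : ContDiff ℝ (⊤ : ℕ∞) φ' := hφ.comp hesymm
  have hφ'Ω : tsupport φ' ⊆ Ω := by
    rw [tsupport_comp_eq_preimage]
    intro y hy
    simpa only [e.apply_symm_apply] using show e (e.symm y) ∈ Ω from hφΩ hy
  have fderiv_eq (z : E) : fderiv ℝ φ z = r • fderiv ℝ φ' (e z) := by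
    have hφ_eq : φ = φ' ∘ e := by ext; simp [φ']
    have he : HasFDerivAt e (r • ContinuousLinearMap.id ℝ E) z :=
      ((hasFDerivAt_id z).const_smul r).const_add x
    conv_lhs => rw [hφ_eq]
    rw [((hφ'.differentiable (by simp) (e z)).hasFDerivAt.comp z he).fderiv]
    ext
    simp
  calc ∫ z, fderiv ℝ φ z v • f (x + r • z) ∂μ
      = r • ∫ z, fderiv ℝ φ' (x + r • z) v • f (x + r • z) ∂μ := by
        simp only [fderiv_eq, smul_apply, smul_assoc, integral_smul]
        rfl
    _ = r • |(r ^ Module.finrank ℝ E)⁻¹| • ∫ y, fderiv ℝ φ' (x + y) v • f (x + y) ∂μ := by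
        rw [Measure.integral_comp_smul μ (fun y => fderiv ℝ φ' (x + y) v • f (x + y))]
    _ = 0 := by
        rw [integral_add_left_eq_self (fun y => fderiv ℝ φ' y v • f y),
          hf φ' hφ' (hφc.comp_homeomorph e.symm) hφ'Ω, smul_zero, smul_zero]

theorem convolution_add_eq (hf : HasZeroWeakLineDerivOn μ f v univ)
    (hfi : LocallyIntegrable f μ) {φ : E → ℝ} (hφ : ContDiff ℝ (⊤ : ℕ∞) φ)
    (hφc : HasCompactSupport φ) (y : E) :
    (φ ⋆[lsmul ℝ ℝ, μ] f) (y + v) = (φ ⋆[lsmul ℝ ℝ, μ] f) y := by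
  rw [← convolution_flip]
  set L := (lsmul ℝ ℝ : ℝ →L[ℝ] F →L[ℝ] F).flip
  have hφ1 : ContDiff ℝ 1 φ := hφ.of_le (by norm_cast)
  have fderiv_apply_eq_zero (z : E) : (f ⋆[L.precompR E, μ] fderiv ℝ φ) z v = 0 := by
    rw [convolution_precompR_apply L hfi (hφc.fderiv ℝ) (hφ1.continuous_fderiv one_ne_zero),
      convolution_flip]
    simpa [convolution_def, ← sub_eq_add_neg] using
      hf.comp_add_smul z (neg_ne_zero.2 one_ne_zero) φ hφ hφc (subset_univ _)
  have hderiv (t : ℝ) : HasDerivAt (fun t : ℝ => (f ⋆[L, μ] φ) (y + t • v)) 0 t := by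
    have hline : HasDerivAt (fun t : ℝ => y + t • v) v t := by
      simpa using ((hasDerivAt_id t).smul_const v).const_add y
    exact ((hφc.hasFDerivAt_convolution_right L hfi hφ1 (y + t • v)).comp_hasDerivAt t
      hline).congr_deriv (fderiv_apply_eq_zero _)
  simpa using is_const_of_deriv_eq_zero (fun t => (hderiv t).differentiableAt)
    (fun t => (hderiv t).deriv) 1 0

theorem apply_add_eq_of_eventuallyEq [CompleteSpace F] (hf : HasZeroWeakLineDerivOn μ f v univ)
    (hfi : LocallyIntegrable f μ) (hx : ∀ᶠ z in 𝓝 x, f z = f x)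
    (hxv : ∀ᶠ z in 𝓝 (x + v), f z = f (x + v)) : f (x + v) = f x := by
  obtain ⟨r, hr, hrx⟩ := Metric.eventually_nhds_iff_ball.1 hx
  obtain ⟨s, hs, hsx⟩ := Metric.eventually_nhds_iff_ball.1 hxv
  have hrs : 0 < min r s := lt_min hr hs
  let η : ContDiffBump (0 : E) := ⟨min r s / 2, min r s, half_pos hrs, half_lt_self hrs⟩
  calc f (x + v) = (η.normed μ ⋆[lsmul ℝ ℝ, μ] f) (x + v) :=
        (η.normed_convolution_eq_right fun z hz =>
          hsx z (ball_subset_ball (min_le_right r s) hz)).symm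
    _ = (η.normed μ ⋆[lsmul ℝ ℝ, μ] f) x :=
        hf.convolution_add_eq hfi η.contDiff_normed η.hasCompactSupport_normed x
    _ = f x := η.normed_convolution_eq_right fun z hz =>
        hrx z (ball_subset_ball (min_le_left r s) hz)

theorem of_tendsto_blowup {C : ℝ} (hf : HasZeroWeakLineDerivOn μ f v Ω)
    (hfm : AEStronglyMeasurable f (μ.restrict Ω)) (hfC : ∀ y, ‖f y‖ ≤ C) (hΩ : Ω ∈ 𝓝 x)
    (hlim : ∀ᵐ z ∂μ, Tendsto (fun r : ℝ => f (x + r • z)) (𝓝[>] 0) (𝓝 (g z))) :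
    HasZeroWeakLineDerivOn μ g v univ := by
  intro φ hφ hφc _
  let K := tsupport φ
  have mapsTo_Ω : ∀ᶠ r : ℝ in 𝓝[>] 0, MapsTo (fun z => x + r • z) K Ω :=
    eventually_nhdsWithin_of_eventually_nhds (eventually_mapsTo_add_smul hφc.isCompact hΩ)
  have hφ' : Continuous fun z => fderiv ℝ φ z v :=
    (hφ.continuous_fderiv (by simp)).clm_apply continuous_const
  have hmeas : ∀ᶠ r : ℝ in 𝓝[>] 0, AEStronglyMeasurable
      (fun z => fderiv ℝ φ z v • f (x + r • z)) (μ.restrict K) := by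
    filter_upwards [mapsTo_Ω, self_mem_nhdsWithin] with r hr hr0
    have hqmp : Measure.QuasiMeasurePreserving (fun z => x + r • z) μ μ :=
      (quasiMeasurePreserving_add_left μ x).comp
        (Measure.quasiMeasurePreserving_smul μ (ne_of_gt hr0))
    exact hφ'.aestronglyMeasurable.smul (hfm.comp_quasiMeasurePreserving (hqmp.restrict hr))
  have hbound : Integrable (fun z => ‖fderiv ℝ φ z v‖ * C) (μ.restrict K) :=
    ((hφ'.integrable_of_hasCompactSupport (hφc.fderiv_apply ℝ v)).norm.mul_const C).restrict
  have htendsto : Tendsto (fun r : ℝ => ∫ z in K, fderiv ℝ φ z v • f (x + r • z) ∂μ)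
      (𝓝[>] 0) (𝓝 (∫ z in K, fderiv ℝ φ z v • g z ∂μ)) := by
    refine tendsto_integral_filter_of_dominated_convergence _ hmeas
      (Eventually.of_forall fun r => Eventually.of_forall fun z => ?_) hbound
      (ae_restrict_of_ae (hlim.mono fun z hz => hz.const_smul _))
    rw [norm_smul]
    gcongr
    exact hfC _
  have hzero : ∀ᶠ r : ℝ in 𝓝[>] 0, ∫ z in K, fderiv ℝ φ z v • f (x + r • z) ∂μ = 0 := by
    filter_upwards [mapsTo_Ω, self_mem_nhdsWithin] with r hr hr0
    rw [setIntegral_fderiv_smul_of_tsupport_subset subset_rfl]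
    exact hf.comp_add_smul x (ne_of_gt hr0) φ hφ hφc hr
  rw [← setIntegral_fderiv_smul_of_tsupport_subset (s := K) subset_rfl]
  exact tendsto_nhds_unique htendsto (tendsto_const_nhds.congr' (hzero.mono fun _ h => h.symm))

end HasZeroWeakLineDerivOn

end WeakLineDeriv

section Halfspace

variable {E : Type*} [NormedAddCommGroup E] [NormedSpace ℝ E] {p : E → ℝ} {p' : E →L[ℝ] ℝ}
  {x z v : E}

theorem eventually_pos_add_smul_iff (hp : HasFDerivAt p p' x) (hpx : p x = 0) (hz : p' z ≠ 0) :
    ∀ᶠ r : ℝ in 𝓝[>] 0, 0 < p (x + r • z) ↔ 0 < p' z := by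
  have hslope : Tendsto (fun r : ℝ => r⁻¹ * p (x + r • z)) (𝓝[>] 0) (𝓝 (p' z)) := by
    simpa [hpx] using (hp.hasLineDerivAt z).tendsto_slope_zero_right
  rcases hz.lt_or_gt with hneg | hpos
  · filter_upwards [hslope.eventually_lt_const hneg, self_mem_nhdsWithin] with r hr hr0
    have : p (x + r • z) < 0 := neg_of_mul_neg_right hr (inv_pos.2 hr0).le
    simp [this.not_gt, hneg.not_gt]
  · filter_upwards [hslope.eventually_const_lt hpos, self_mem_nhdsWithin] with r hr hr0
    have : 0 < p (x + r • z) := (mul_pos_iff_of_pos_left (inv_pos.2 hr0)).1 hr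
    simp [this, hpos]

theorem eventually_indicator_pos_eq (hz : p' z ≠ 0) :
    ∀ᶠ y in 𝓝 z, {y | 0 < p' y}.indicator (1 : E → ℝ) y = {y | 0 < p' y}.indicator 1 z := by
  rcases hz.lt_or_gt with hneg | hpos
  · filter_upwards [p'.continuous.continuousAt.eventually_lt_const hneg] with y hy
    simp [hy.not_gt, hneg.not_gt]
  · filter_upwards [p'.continuous.continuousAt.eventually_const_lt hpos] with y hy
    simp [hy, hpos]

variable [MeasurableSpace E] [BorelSpace E] [FiniteDimensional ℝ E] {μ : Measure E}
  [μ.IsAddHaarMeasure] {Ω : Set E}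

theorem ae_apply_ne_zero (hp' : p' ≠ 0) : ∀ᵐ z ∂μ, p' z ≠ 0 := by
  have hker : LinearMap.ker p'.toLinearMap ≠ ⊤ := by
    simpa [LinearMap.ker_eq_top, DFunLike.ext_iff, LinearMap.ext_iff] using hp'
  simp only [ae_iff, not_not]
  exact Measure.addHaar_submodule μ _ hker

theorem HasZeroWeakLineDerivOn.indicator_pos_blowup
    (hw : HasZeroWeakLineDerivOn μ ({y | 0 < p y}.indicator (1 : E → ℝ)) v Ω) (hΩ : Ω ∈ 𝓝 x)
    (hpm : AEMeasurable p (μ.restrict Ω)) (hp : HasFDerivAt p p' x) (hpx : p x = 0)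
    (hp' : p' ≠ 0) :
    HasZeroWeakLineDerivOn μ ({z | 0 < p' z}.indicator (1 : E → ℝ)) v univ := by
  refine hw.of_tendsto_blowup (C := 1)
    (aestronglyMeasurable_one.indicator₀ (nullMeasurableSet_lt aemeasurable_const hpm))
    (fun y => (norm_indicator_le_norm_self _ y).trans (by simp)) hΩ ?_
  filter_upwards [ae_apply_ne_zero hp'] with z hz
  refine tendsto_const_nhds.congr' ?_
  filter_upwards [eventually_pos_add_smul_iff hp hpx hz] with r hr
  simp only [indicator_apply, mem_ofPred_eq, hr, Pi.one_apply]

theorem HasZeroWeakLineDerivOn.apply_eq_zero_of_indicator_pos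
    (hw : HasZeroWeakLineDerivOn μ ({z | 0 < p' z}.indicator (1 : E → ℝ)) v univ) :
    p' v = 0 := by
  by_contra hv
  have hloc : LocallyIntegrable ({z | 0 < p' z}.indicator (1 : E → ℝ)) μ :=
    (locallyIntegrable_const 1).indicator (measurableSet_lt measurable_const p'.measurable)
  have hjump : {z | 0 < p' z}.indicator (1 : E → ℝ) (-v + (2 : ℝ) • v) =
      {z | 0 < p' z}.indicator 1 (-v) := by
    refine (hw.smul_right 2).apply_add_eq_of_eventuallyEq hloc
      (eventually_indicator_pos_eq ?_) (eventually_indicator_pos_eq ?_) <;>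
      simp [two_smul, hv]
  rcases lt_or_gt_of_ne hv with hneg | hpos
  · simp [two_smul, hneg, hneg.not_gt] at hjump
  · simp [two_smul, hpos, hpos.not_gt] at hjump

theorem HasZeroWeakLineDerivOn.hasFDerivAt_apply_eq_zero
    (hw : HasZeroWeakLineDerivOn μ ({y | 0 < p y}.indicator (1 : E → ℝ)) v Ω) (hΩ : Ω ∈ 𝓝 x)
    (hpm : AEMeasurable p (μ.restrict Ω)) (hp : HasFDerivAt p p' x) (hpx : p x = 0) :
    p' v = 0 := by
  rcases eq_or_ne p' 0 with rfl | hp'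
  · simp
  · exact (hw.indicator_pos_blowup hΩ hpm hp hpx hp').apply_eq_zero_of_indicator_pos

end Halfspace

section Umbilical

variable {E F : Type*} [NormedAddCommGroup E] [InnerProductSpace ℝ E]
  [NormedAddCommGroup F] [NormedSpace ℝ F]

theorem exists_eq_smul_one_of_inner_eq_zero (T : E →ₗ[ℝ] E)
    (hT : ∀ v w, ⟪v, w⟫ = 0 → ⟪T v, w⟫ = 0) : ∃ c : ℝ, T = c • 1 := by
  refine LinearMap.exists_eq_smul_id_of_forall_notLinearIndependent fun v => ?_
  have hTv : T v ∈ Submodule.span ℝ {v} := by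
    rw [← Submodule.orthogonal_orthogonal (Submodule.span ℝ {v})]
    intro w hw
    rw [real_inner_comm]
    exact hT v w (Submodule.mem_orthogonal_singleton_iff_inner_right.1 hw)
  obtain ⟨c, hc⟩ := Submodule.mem_span_singleton.1 hTv
  intro hind
  exact neg_ne_zero.2 one_ne_zero (LinearIndependent.pair_iff.1 hind c (-1) (by simp [hc])).2

theorem hasFDerivAt_norm_inv_smul_self {u : F → E} {u' : F →L[ℝ] E} {x : F}
    (hu : HasFDerivAt u u' x) (hux : u x ≠ 0) :
    HasFDerivAt (fun y => ‖u y‖⁻¹ • u y) (‖u x‖⁻¹ • (ℝ ∙ u x)ᗮ.starProjection ∘L u') x := by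
  have hnorm : ‖u x‖ ≠ 0 := norm_ne_zero_iff.2 hux
  have hnorm_deriv : HasFDerivAt (fun y => ‖u y‖) (‖u x‖⁻¹ • innerSL ℝ (u x) ∘L u') x := by
    have h := hu.norm_sq.sqrt (pow_ne_zero 2 hnorm)
    simp only [Real.sqrt_sq (norm_nonneg _)] at h
    refine h.congr_fderiv ?_
    ext w
    simp only [one_div, mul_inv_rev, smul_apply, ContinuousLinearMap.comp_apply,
      coe_innerSL_apply, nsmul_eq_mul, Nat.cast_ofNat, smul_eq_mul]
    field_simp
  have hd := ((hasDerivAt_inv hnorm).comp_hasFDerivAt x hnorm_deriv).smul hu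
  refine hd.congr_fderiv ?_
  ext w
  simp only [Function.comp_apply, neg_smul, add_apply, smul_apply,
    ContinuousLinearMap.smulRight_apply, neg_apply, ContinuousLinearMap.comp_apply,
    coe_innerSL_apply, smul_eq_mul, Submodule.starProjection_orthogonal_val,
    Submodule.starProjection_singleton, Real.ringHom_apply]
  module

end Umbilical

theorem contDiffOn_gradient {E : Type*} [NormedAddCommGroup E] [InnerProductSpace ℝ E]
    [CompleteSpace E] {ψ : E → ℝ} {Ω : Set E} {m n : WithTop ℕ∞} (hψ : ContDiffOn ℝ n ψ Ω)
    (hΩ : IsOpen Ω) (hmn : m + 1 ≤ n) : ContDiffOn ℝ m (gradient ψ) Ω :=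
  (InnerProductSpace.toDual ℝ E).symm.contDiff.comp_contDiffOn (hψ.fderiv_of_isOpen hΩ hmn)

section Kinetic

variable {N : ℕ} {Ω : Set (EuclideanSpace ℝ (Fin N))}
  {u : EuclideanSpace ℝ (Fin N) → EuclideanSpace ℝ (Fin N)} {x ξ v : EuclideanSpace ℝ (Fin N)}

theorem KineticFormulation.hasZeroWeakLineDerivOn (hkin : KineticFormulation Ω u) (hξ : ‖ξ‖ = 1)
    (hvξ : ⟪v, ξ⟫ = 0) :
    HasZeroWeakLineDerivOn volume
      ({y | 0 < ⟪u y, ξ⟫}.indicator (1 : EuclideanSpace ℝ (Fin N) → ℝ)) v Ω := by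
  intro φ hφ hφc hφΩ
  rw [← setIntegral_fderiv_smul_of_tsupport_subset hφΩ]
  simpa [chi, indicator_apply, mul_comm, inner_gradient_right] using hkin ξ hξ v hvξ φ hφ hφc hφΩ

theorem KineticFormulation.inner_fderiv_eq_zero (hkin : KineticFormulation Ω u) (hΩ : Ω ∈ 𝓝 x)
    (hum : AEMeasurable u (volume.restrict Ω)) (hu : DifferentiableAt ℝ u x)
    (hξ : ⟪u x, ξ⟫ = 0) (hvξ : ⟪v, ξ⟫ = 0) : ⟪fderiv ℝ u x v, ξ⟫ = 0 := by
  rcases eq_or_ne ξ 0 with rfl | hξ0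
  · exact inner_zero_right _
  let e := ‖ξ‖⁻¹ • ξ
  have inner_e_eq_zero_iff (w : EuclideanSpace ℝ (Fin N)) : ⟪w, e⟫ = 0 ↔ ⟪w, ξ⟫ = 0 := by
    simp [e, real_inner_smul_right, hξ0]
  have hderiv : HasFDerivAt (fun y => ⟪u y, e⟫) (innerSL ℝ e ∘L fderiv ℝ u x) x :=
    ((innerSL ℝ e).hasFDerivAt.comp x hu.hasFDerivAt).congr_of_eventuallyEq
      (Eventually.of_forall fun y => real_inner_comm e (u y))
  rw [← inner_e_eq_zero_iff, real_inner_comm]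
  exact (hkin.hasZeroWeakLineDerivOn (norm_smul_inv_norm hξ0)
    ((inner_e_eq_zero_iff v).2 hvξ)).hasFDerivAt_apply_eq_zero hΩ hum.inner_const hderiv
    ((inner_e_eq_zero_iff _).2 hξ)

theorem level_sets_umbilical_points_general (hkin : KineticFormulation Ω u) (hΩ : Ω ∈ 𝓝 x)
    (hum : AEMeasurable u (volume.restrict Ω)) (hu : DifferentiableAt ℝ u x) (hux : u x ≠ 0) :
    ∃ lam : ℝ, ∀ w, ⟪w, u x⟫ = 0 → fderiv ℝ (fun y => ‖u y‖⁻¹ • u y) x w = lam • w := by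
  let K := (ℝ ∙ u x)ᗮ
  let T : K →L[ℝ] K := K.orthogonalProjectionOnto ∘L fderiv ℝ u x ∘L K.subtypeL
  obtain ⟨c, hc⟩ : ∃ c : ℝ, (T : K →ₗ[ℝ] K) = c • 1 := by
    refine exists_eq_smul_one_of_inner_eq_zero _ fun v ξ hvξ => ?_
    simpa [T] using hkin.inner_fderiv_eq_zero hΩ hum hu
      (Submodule.mem_orthogonal_singleton_iff_inner_right.1 ξ.2) hvξ
  refine ⟨‖u x‖⁻¹ * c, fun w hw => ?_⟩
  have hTw : K.starProjection (fderiv ℝ u x w) = c • w :=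
    congr_arg K.subtype
      (LinearMap.congr_fun hc ⟨w, Submodule.mem_orthogonal_singleton_iff_inner_left.2 hw⟩)
  rw [(hasFDerivAt_norm_inv_smul_self hu.hasFDerivAt hux).fderiv, mul_smul, ← hTw]
  rfl

end Kinetic

theorem level_sets_umbilical_points (N : ℕ) (hN : 3 ≤ N)
    (Ω : Set (EuclideanSpace ℝ (Fin N))) (hΩ : IsOpen Ω)
    (ψ : EuclideanSpace ℝ (Fin N) → ℝ) (hψ : ContDiffOn ℝ (⊤ : ℕ∞) ψ Ω)
    (hkin : KineticFormulation Ω (fun x => gradient ψ x))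
    (α : ℝ) (hnv : ∀ x ∈ Ω, ψ x = α → gradient ψ x ≠ 0)
    (S : Set (EuclideanSpace ℝ (Fin N))) (x₀ : EuclideanSpace ℝ (Fin N))
    (hx₀ : x₀ ∈ {x ∈ Ω | ψ x = α})
    (hS : S = connectedComponentIn {x ∈ Ω | ψ x = α} x₀) :
    ∀ x ∈ S, ∃ lam : ℝ, ∀ w : EuclideanSpace ℝ (Fin N), ⟪w, gradient ψ x⟫ = 0 →
      fderiv ℝ (fun y => ‖gradient ψ y‖⁻¹ • gradient ψ y) x w = lam • w := by
  intro x hx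
  obtain ⟨hxΩ, hxα⟩ := connectedComponentIn_subset _ _ (hS ▸ hx)
  have hΩx : Ω ∈ 𝓝 x := hΩ.mem_nhds hxΩ
  have hgrad : ContDiffOn ℝ 1 (gradient ψ) Ω := contDiffOn_gradient hψ hΩ (by norm_cast)
  exact level_sets_umbilical_points_general hkin hΩx
    (hgrad.continuousOn.aemeasurable hΩ.measurableSet)
    ((hgrad.differentiableOn one_ne_zero).differentiableAt hΩx) (hnv x hxΩ hxα)
end
end

section
/- Let N ≥ 3, Ω ⊆ ℝ^N an open set, and ψ : Ω → ℝ a smooth function such that the gradient field u = ∇ψ satisfies the kinetic formulation. Assume that for some α ∈ ℝ, |∇ψ(x)| ≠ 0 for every x in the level set {x ∈ Ω : ψ(x) = α}, and let S be a connected component of this level set. Then there exist an open neighborhood ω ⊆ Ω of S, an open interval I ⊆ ℝ, and a smooth function F : I → ℝ with F′ ≠ 0 on I, such that either there is a point P ∈ ℝ^N with ψ(x) = F(|x − P|) for every x ∈ ω, or there is a vector ξ ∈ S^{N−1} with ψ(x) = F(x·ξ) for every x ∈ ω. -/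
open MeasureTheory Metric Set Filter
open scoped RealInnerProductSpace ENNReal Topology

noncomputable section

/-!
For `ξ ⊥ z - y` the function `χ(·, ξ)` has weak derivative zero along `z - y`, so after
mollification its values at the two ends of the segment from `y` to `z` agree. Letting `ξ` vary,
the lines `y + ℝ u(y)` and `z + ℝ u(z)` are coplanar. In dimension at least three, pairwise coplanar
lines filling an open set all pass through one point of projective space, and this point is
propagated along `S` by connectedness. Hence `∇ψ(z)` is parallel to `z - P`, or to a fixed `ξ`, near
`S`; so `ψ` is locally a function of `|z - P|`, or of `z·ξ`. As `ψ` is constant on `S`, so is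
`|z - P|`, or `z·ξ`, and the local functions are all extensions of a single germ.
-/

section WeakDerivative

open scoped Convolution

variable {E : Type*} [NormedAddCommGroup E] [NormedSpace ℝ E] [MeasurableSpace E]
  {μ : Measure E} {f : E → ℝ} {v : E} {Ω : Set E}

/-- The derivative of `f` along `v` vanishes on `Ω` in the sense of distributions. The integral runs
over the whole space, so `f` matters only on `Ω`, where the test functions are supported. -/
def WeakDerivZeroAlong (μ : Measure E) (f : E → ℝ) (v : E) (Ω : Set E) : Prop :=
  ∀ φ : E → ℝ, ContDiff ℝ (⊤ : ℕ∞) φ → HasCompactSupport φ → tsupport φ ⊆ Ω →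
    ∫ x, f x * fderiv ℝ φ x v ∂μ = 0

variable [BorelSpace E] [FiniteDimensional ℝ E] [μ.IsAddHaarMeasure]

lemma hasFDerivAt_normed_convolution (ρ : ContDiffBump (0 : E)) (hf : LocallyIntegrable f μ)
    (x : E) :
    HasFDerivAt (ρ.normed μ ⋆[ContinuousLinearMap.lsmul ℝ ℝ, μ] f)
      (fderiv ℝ (ρ.normed μ ⋆[ContinuousLinearMap.lsmul ℝ ℝ, μ] f) x) x :=
  (ρ.hasCompactSupport_normed.hasFDerivAt_convolution_left _ ρ.contDiff_normed hf x)
    |>.differentiableAt.hasFDerivAt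

lemma WeakDerivZeroAlong.fderiv_normed_convolution_apply (h : WeakDerivZeroAlong μ f v Ω)
    (hf : LocallyIntegrable f μ) (ρ : ContDiffBump (0 : E)) {x : E}
    (hx : closedBall x ρ.rOut ⊆ Ω) :
    fderiv ℝ (ρ.normed μ ⋆[ContinuousLinearMap.lsmul ℝ ℝ, μ] f) x v = 0 := by
  have hφ : tsupport (fun t => ρ.normed μ (x - t)) ⊆ Ω := by
    refine (tsupport_comp_eq_preimage (ρ.normed μ) (Homeomorph.subLeft x)).trans_subset
      (Subset.trans (fun t ht => ?_) hx)
    rw [mem_preimage, ρ.tsupport_normed_eq, mem_closedBall_zero_iff] at ht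
    rwa [mem_closedBall', dist_eq_norm]
  have hφ' (t : E) : fderiv ℝ (fun s => ρ.normed μ (x - s)) t v
      = -fderiv ℝ (ρ.normed μ) (x - t) v := by
    have hρ : DifferentiableAt ℝ (ρ.normed μ) (x - t) :=
      (ρ.contDiff_normed (n := 1)).differentiable one_ne_zero _
    have : HasFDerivAt (fun s => ρ.normed μ (x - s)) _ t :=
      hρ.hasFDerivAt.comp t ((hasFDerivAt_id t).const_sub x)
    simp [this.fderiv]
  have htest := h _ (ρ.contDiff_normed.comp (contDiff_const.sub contDiff_id))
    (ρ.hasCompactSupport_normed.comp_homeomorph (Homeomorph.subLeft x)) hφ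
  simp only [Function.comp_def, id_eq, hφ', mul_neg, integral_neg, neg_eq_zero] at htest
  rw [← convolution_flip, (ρ.hasCompactSupport_normed.hasFDerivAt_convolution_right _ hf
      ρ.contDiff_normed x).fderiv,
    convolution_precompR_apply _ hf (ρ.hasCompactSupport_normed.fderiv ℝ)
      ((ρ.contDiff_normed (n := 1)).continuous_fderiv one_ne_zero), ← htest]
  simp [convolution_def, mul_comm]

theorem WeakDerivZeroAlong.eq_of_eventually_eq {y z : E} (h : WeakDerivZeroAlong μ f (z - y) Ω)
    (hΩ : IsOpen Ω) (hf : LocallyIntegrable f μ) (hyz : segment ℝ y z ⊆ Ω)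
    (hy : ∀ᶠ x in 𝓝 y, f x = f y) (hz : ∀ᶠ x in 𝓝 z, f x = f z) : f y = f z := by
  have hseg : IsCompact (segment ℝ y z) := by
    rw [segment_eq_image_lineMap]
    exact isCompact_Icc.image (by fun_prop)
  obtain ⟨δ, hδ, hδΩ⟩ := hseg.exists_cthickening_subset_open hΩ hyz
  obtain ⟨δy, hδy, hby⟩ := Metric.eventually_nhds_iff_ball.1 hy
  obtain ⟨δz, hδz, hbz⟩ := Metric.eventually_nhds_iff_ball.1 hz
  obtain ⟨r, hr, hrδ, hry, hrz⟩ : ∃ r > 0, r ≤ δ ∧ r ≤ δy ∧ r ≤ δz :=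
    ⟨min δ (min δy δz), by positivity, by simp, by simp, by simp⟩
  let ρ : ContDiffBump (0 : E) := ⟨r / 2, r, by positivity, by linarith⟩
  obtain ⟨c, hc, hmvt⟩ := domain_mvt (s := univ)
    (fun x _ => (hasFDerivAt_normed_convolution ρ hf x).hasFDerivWithinAt) convex_univ
    (mem_univ y) (mem_univ z)
  have hcΩ : closedBall c ρ.rOut ⊆ Ω :=
    (closedBall_subset_cthickening hc r).trans ((cthickening_mono hrδ _).trans hδΩ)
  rwa [h.fderiv_normed_convolution_apply hf ρ hcΩ, sub_eq_zero,
    ρ.normed_convolution_eq_right fun x hx => hbz x (ball_subset_ball hrz hx),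
    ρ.normed_convolution_eq_right fun x hx => hby x (ball_subset_ball hry hx), eq_comm] at hmvt

end WeakDerivative

section Kinetic

variable {N : ℕ} {Ω : Set (EuclideanSpace ℝ (Fin N))}
  {u : EuclideanSpace ℝ (Fin N) → EuclideanSpace ℝ (Fin N)}
  {v y z ξ : EuclideanSpace ℝ (Fin N)}

lemma KineticFormulation.weakDerivZeroAlong (h : KineticFormulation Ω u) (hΩ : MeasurableSet Ω)
    (hξ : ‖ξ‖ = 1) (hv : ⟪v, ξ⟫ = 0) :
    WeakDerivZeroAlong volume (Ω.indicator fun x => chi u x ξ) v Ω := by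
  intro φ hφ hφc hφΩ
  rw [← h ξ hξ v hv φ hφ hφc hφΩ, ← integral_indicator hΩ]
  simp_rw [indicator_mul_left, real_inner_comm (gradient φ _), inner_gradient_left]

lemma locallyIntegrable_indicator_chi (hΩ : IsOpen Ω) (hu : ContinuousOn u Ω)
    (ξ : EuclideanSpace ℝ (Fin N)) :
    LocallyIntegrable (Ω.indicator fun x => chi u x ξ) := by
  have hA : IsOpen (Ω ∩ {x | 0 < ⟪u x, ξ⟫}) :=
    (hu.inner continuousOn_const).isOpen_inter_preimage hΩ isOpen_Ioi
  have hchi : (Ω.indicator fun x => chi u x ξ)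
      = (Ω ∩ {x | 0 < ⟪u x, ξ⟫}).indicator fun _ => 1 := by
    rw [← indicator_indicator]
    rfl
  rw [hchi]
  exact (locallyIntegrable_const 1).indicator hA.measurableSet

lemma KineticFormulation.inner_nonneg_of_norm_eq_one (h : KineticFormulation Ω u) (hΩ : IsOpen Ω)
    (hu : ContinuousOn u Ω) (hyz : segment ℝ y z ⊆ Ω) (hξ : ‖ξ‖ = 1) (hv : ⟪z - y, ξ⟫ = 0)
    (hy : 0 < ⟪u y, ξ⟫) : 0 ≤ ⟪u z, ξ⟫ := by
  by_contra! hz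
  have hyΩ := hyz (left_mem_segment ℝ y z)
  have hzΩ := hyz (right_mem_segment ℝ y z)
  have hcont {x : EuclideanSpace ℝ (Fin N)} (hx : x ∈ Ω) : ContinuousAt (fun x => ⟪u x, ξ⟫) x :=
    (hu.inner continuousOn_const).continuousAt (hΩ.mem_nhds hx)
  have h1 : ∀ᶠ x in 𝓝 y, Ω.indicator (fun x => chi u x ξ) x = 1 := by
    filter_upwards [hΩ.mem_nhds hyΩ, (hcont hyΩ).eventually_const_lt hy] with x hx hpos
    rw [indicator_of_mem hx, chi, if_pos hpos]
  have h0 : ∀ᶠ x in 𝓝 z, Ω.indicator (fun x => chi u x ξ) x = 0 := by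
    filter_upwards [hΩ.mem_nhds hzΩ, (hcont hzΩ).eventually_lt_const hz] with x hx hneg
    rw [indicator_of_mem hx, chi, if_neg hneg.not_gt]
  have heq := (h.weakDerivZeroAlong hΩ.measurableSet hξ hv).eq_of_eventually_eq hΩ
    (locallyIntegrable_indicator_chi hΩ hu ξ) hyz
    (h1.mono fun x hx => hx.trans h1.self_of_nhds.symm)
    (h0.mono fun x hx => hx.trans h0.self_of_nhds.symm)
  rw [h1.self_of_nhds, h0.self_of_nhds] at heq
  exact one_ne_zero heq

theorem KineticFormulation.inner_nonneg (h : KineticFormulation Ω u) (hΩ : IsOpen Ω)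
    (hu : ContinuousOn u Ω) (hyz : segment ℝ y z ⊆ Ω) (hv : ⟪z - y, ξ⟫ = 0)
    (hy : 0 < ⟪u y, ξ⟫) : 0 ≤ ⟪u z, ξ⟫ := by
  have hξ : ξ ≠ 0 := by
    rintro rfl
    simp at hy
  have hξ' : 0 < ‖ξ‖⁻¹ := inv_pos.2 (norm_pos_iff.2 hξ)
  have := h.inner_nonneg_of_norm_eq_one hΩ hu hyz (norm_smul_inv_norm (𝕜 := ℝ) hξ)
    (by simp [inner_smul_right, hv]) (by simpa [inner_smul_right] using mul_pos hξ' hy)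
  simpa [inner_smul_right, hξ'] using this

end Kinetic

section ConcurrentLines

open Submodule

lemma mem_span_singleton_symm {K V : Type*} [DivisionRing K] [AddCommGroup V] [Module K V]
    {a b : V} (h : a ∈ span K {b}) (ha : a ≠ 0) : b ∈ span K {a} := by
  obtain ⟨c, rfl⟩ := mem_span_singleton.1 h
  exact mem_span_singleton.2 ⟨c⁻¹, inv_smul_smul₀ (left_ne_zero_of_smul ha) b⟩

lemma span_pair_eq_span_pair_of_mem {K V : Type*} [DivisionRing K] [AddCommGroup V] [Module K V]
    {a b p q : V} (ha : a ≠ 0) (hb : b ∉ span K {a}) (hap : a ∈ span K {p, q})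
    (hbp : b ∈ span K {p, q}) : span K {a, b} = span K {p, q} := by
  classical
  have hab : LinearIndependent K ![a, b] :=
    (LinearIndependent.pair_iff' ha).2 fun c hc => hb (mem_span_singleton.2 ⟨c, hc⟩)
  have h2 : Module.finrank K (span K {a, b}) = 2 := by
    rw [← Matrix.range_cons_cons_empty a b ![], finrank_span_eq_card hab, Fintype.card_fin]
  have hpq : Module.finrank K (span K {p, q}) ≤ 2 := by
    have := finrank_span_finset_le_card (R := K) {p, q}
    rw [Finset.coe_pair] at this
    exact this.trans Finset.card_le_two
  have := FiniteDimensional.span_of_finite K (Set.toFinite {p, q})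
  exact eq_of_le_of_finrank_le (span_le.2 (pair_subset hap hbp)) (h2 ▸ hpq)

lemma span_pair_ne_top_of_two_lt_rank {K V : Type*} [DivisionRing K] [AddCommGroup V] [Module K V]
    (h : 2 < Module.rank K V) (a b : V) : span K {a, b} ≠ ⊤ := by
  intro htop
  have h2 : Module.rank K (span K {a, b}) ≤ 2 :=
    (rank_span_le _).trans (Cardinal.mk_insert_le.trans (by simp [one_add_one_eq_two]))
  rw [htop, rank_top] at h2
  exact h.not_ge h2

lemma exists_sub_notMem_of_isOpen {E : Type*} [AddCommGroup E] [Module ℝ E]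
    [TopologicalSpace E] [IsTopologicalAddGroup E] [ContinuousSMul ℝ E] {W : Submodule ℝ E}
    (hW : W ≠ ⊤) {U : Set E} (hU : IsOpen U) (hne : U.Nonempty) (p : E) :
    ∃ y ∈ U, p - y ∉ W := by
  by_contra! h
  obtain ⟨y, hy⟩ := hne
  refine hW (W.eq_top_of_nonempty_interior' ⟨p - y, mem_interior.2
    ⟨(p - ·) ⁻¹' U, fun w hw => ?_, hU.preimage (by fun_prop), by simpa using hy⟩⟩)
  simpa using h _ hw

lemma mem_span_or_mem_span_pair_of_inner_nonneg {E : Type*} [NormedAddCommGroup E]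
    [InnerProductSpace ℝ E] {a b v : E}
    (h : ∀ ξ : E, ⟪v, ξ⟫ = 0 → 0 < ⟪a, ξ⟫ → 0 ≤ ⟪b, ξ⟫) :
    a ∈ span ℝ {v} ∨ b ∈ span ℝ {a, v} := by
  refine or_iff_not_imp_left.2 fun ha => ?_
  obtain ⟨q, hvq, haq⟩ : ∃ q, ⟪v, q⟫ = 0 ∧ 0 < ⟪a, q⟫ := by
    rw [← orthogonal_orthogonal (span ℝ {v}), mem_orthogonal] at ha
    push Not at ha
    obtain ⟨q, hq, hqa⟩ := ha
    refine ⟨⟪a, q⟫ • q, ?_, ?_⟩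
    · rw [inner_smul_right, mem_orthogonal_singleton_iff_inner_right.1 hq, mul_zero]
    · rw [inner_smul_right, ← sq]
      exact sq_pos_of_ne_zero (real_inner_comm a q ▸ hqa)
  have := FiniteDimensional.span_of_finite ℝ (Set.toFinite {a, v})
  rw [← orthogonal_orthogonal (span ℝ {a, v}), mem_orthogonal']
  intro ξ hξ
  have haξ : ⟪a, ξ⟫ = 0 := hξ a (subset_span (by simp))
  have hvξ : ⟪v, ξ⟫ = 0 := hξ v (subset_span (by simp))
  have hline (s : ℝ) : 0 ≤ ⟪b, q⟫ + s * ⟪b, ξ⟫ := by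
    have := h (q + s • ξ) (by simp [inner_add_right, inner_smul_right, hvq, hvξ])
      (by simpa [inner_add_right, inner_smul_right, haξ] using haq)
    rwa [inner_add_right, inner_smul_right] at this
  by_contra hb
  have := hline (-(⟪b, q⟫ + 1) / ⟪b, ξ⟫)
  rw [div_mul_cancel₀ _ hb] at this
  linarith

section Module

variable {E : Type*} [AddCommGroup E] [Module ℝ E] {u : E → E} {B : Set E} {y z y₁ y₂ b : E}
  {ε : ℝ}

/-- The lines `y + ℝ u(y)`, for `y ∈ B`, are pairwise coplanar: for `y ≠ z` the alternatives say
that the line at `y` contains `z`, or that the line at `z` lies in the plane spanned by the line at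
`y` and the point `z`. -/
def PairwiseCoplanarLines (u : E → E) (B : Set E) : Prop :=
  ∀ y ∈ B, ∀ z ∈ B, u y ∈ span ℝ {z - y} ∨ u z ∈ span ℝ {u y, z - y}

/-- The line `z + ℝ u(z)` passes through the point of projective space with homogeneous coordinates
`[b : ε]`: the point `ε⁻¹ • b` when `ε ≠ 0`, the direction `b` at infinity when `ε = 0`. Central and
parallel pencils of lines are thereby treated at once. -/
def LinePassesThrough (u : E → E) (ε : ℝ) (b z : E) : Prop :=
  b - ε • z ∈ span ℝ {u z}

lemma PairwiseCoplanarLines.mem_span_pair (h : PairwiseCoplanarLines u B) (hy : y ∈ B)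
    (hz : z ∈ B) (hu : u y ≠ 0) (hyz : z - y ∉ span ℝ {u y}) : u z ∈ span ℝ {u y, z - y} :=
  (h y hy z hz).resolve_left fun huy => hyz (mem_span_singleton_symm huy hu)

lemma LinePassesThrough.sub_smul_mem_span_pair (h : LinePassesThrough u ε b y) (z : E) :
    b - ε • z ∈ span ℝ {u y, z - y} := by
  have : b - ε • z = (b - ε • y) - ε • (z - y) := by module
  rw [this]
  exact sub_mem (span_mono (by simp) h) (smul_mem _ _ (subset_span (by simp)))

/-- The planes spanned by `z` and the lines at `y₁` and `y₂` meet in a single line, and both contain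
the line at `z` and the common point. -/
lemma LinePassesThrough.of_two (hcop : PairwiseCoplanarLines u B) (hu : ∀ x ∈ B, u x ≠ 0)
    (hy₁ : y₁ ∈ B) (hy₂ : y₂ ∈ B) (hz : z ∈ B)
    (h₁ : LinePassesThrough u ε b y₁) (h₂ : LinePassesThrough u ε b y₂)
    (hzy₁ : z - y₁ ∉ span ℝ {u y₁}) (hzy₂ : z - y₂ ∉ span ℝ {u y₂})
    (hne : span ℝ {u y₁, z - y₁} ≠ span ℝ {u y₂, z - y₂}) : LinePassesThrough u ε b z := by
  by_contra hbz
  have hplane {y : E} (hy : y ∈ B) (h : LinePassesThrough u ε b y) (hzy : z - y ∉ span ℝ {u y}) :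
      span ℝ {u z, b - ε • z} = span ℝ {u y, z - y} :=
    span_pair_eq_span_pair_of_mem (hu z hz) hbz (hcop.mem_span_pair hy hz (hu y hy) hzy)
      (h.sub_smul_mem_span_pair z)
  exact hne ((hplane hy₁ h₁ hzy₁).symm.trans (hplane hy₂ h₂ hzy₂))

lemma PairwiseCoplanarLines.exists_common_point (hcop : PairwiseCoplanarLines u B)
    (hy₁ : y₁ ∈ B) (hy₂ : y₂ ∈ B) (h₁ : u y₁ ≠ 0) (h₂ : u y₂ ∉ span ℝ {u y₁}) :
    ∃ P, P - y₁ ∈ span ℝ {u y₁} ∧ P - y₂ ∈ span ℝ {u y₂} := by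
  by_cases hy : y₂ - y₁ ∈ span ℝ {u y₁}
  · exact ⟨y₂, hy, by simp⟩
  obtain ⟨s, t, hst⟩ := Submodule.mem_span_pair.1 (hcop.mem_span_pair hy₁ hy₂ h₁ hy)
  have ht : t ≠ 0 := by
    rintro rfl
    exact h₂ (mem_span_singleton.2 ⟨s, by simpa using hst⟩)
  have hP : y₁ - (t⁻¹ * s) • u y₁ - y₂ = -t⁻¹ • u y₂ := by
    rw [← hst]
    match_scalars <;> field_simp
  refine ⟨y₁ - (t⁻¹ * s) • u y₁, mem_span_singleton.2 ⟨-(t⁻¹ * s), by module⟩, ?_⟩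
  exact hP ▸ smul_mem _ _ (mem_span_singleton_self _)

end Module

variable {E : Type*} [AddCommGroup E] [Module ℝ E] [TopologicalSpace E] [IsTopologicalAddGroup E]
  [ContinuousSMul ℝ E] {u : E → E} {B U S : Set E} {b x : E} {ε : ℝ}

lemma LinePassesThrough.of_isOpen (hE : 2 < Module.rank ℝ E) (hcop : PairwiseCoplanarLines u B)
    (hu : ∀ x ∈ B, u x ≠ 0) (hU : IsOpen U) (hUB : U ⊆ B) (hne : U.Nonempty)
    (h : ∀ y ∈ U, LinePassesThrough u ε b y) : ∀ z ∈ B, LinePassesThrough u ε b z := by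
  intro z hz
  by_cases hbz : b - ε • z = 0
  · simp [LinePassesThrough, hbz]
  have hoff {y : E} (hy : y ∈ U) (hzy : z - y ∉ span ℝ {b - ε • z}) : z - y ∉ span ℝ {u y} := by
    intro hzu
    have hbu : b - ε • z ∈ span ℝ {u y} := by
      have : b - ε • z = (b - ε • y) - ε • (z - y) := by module
      exact this ▸ sub_mem (h y hy) (smul_mem _ _ hzu)
    exact hzy ((span_singleton_le_iff_mem _ _).2 (mem_span_singleton_symm hbu hbz) hzu)
  obtain ⟨y₁, hy₁, hzy₁⟩ := exists_sub_notMem_of_isOpen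
    (span_pair_ne_top_of_two_lt_rank hE (b - ε • z) (b - ε • z)) hU hne z
  rw [Set.pair_eq_singleton] at hzy₁
  obtain ⟨y₂, hy₂, hzy₂⟩ := exists_sub_notMem_of_isOpen
    (span_pair_ne_top_of_two_lt_rank hE (u y₁) (z - y₁)) hU hne z
  have hle : span ℝ {b - ε • z} ≤ span ℝ {u y₁, z - y₁} :=
    (span_singleton_le_iff_mem _ _).2 ((h y₁ hy₁).sub_smul_mem_span_pair z)
  exact .of_two hcop hu (hUB hy₁) (hUB hy₂) hz (h y₁ hy₁) (h y₂ hy₂) (hoff hy₁ hzy₁)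
    (hoff hy₂ fun hmem => hzy₂ (hle hmem)) fun heq => hzy₂ (heq ▸ subset_span (by simp))

theorem PairwiseCoplanarLines.exists_linePassesThrough [T2Space E] (hE : 2 < Module.rank ℝ E)
    (hcop : PairwiseCoplanarLines u B) (hu : ∀ x ∈ B, u x ≠ 0) (hB : IsOpen B) (hne : B.Nonempty) :
    ∃ (ε : ℝ) (b : E), (ε ≠ 0 ∨ b ≠ 0) ∧ ∀ z ∈ B, LinePassesThrough u ε b z := by
  obtain ⟨y₁, hy₁⟩ := hne
  by_cases hpar : ∀ z ∈ B, u z ∈ span ℝ {u y₁}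
  · refine ⟨0, u y₁, .inr (hu y₁ hy₁), fun z hz => ?_⟩
    simpa [LinePassesThrough] using mem_span_singleton_symm (hpar z hz) (hu z hz)
  push Not at hpar
  obtain ⟨y₂, hy₂, hu₂⟩ := hpar
  obtain ⟨P, hP₁, hP₂⟩ := hcop.exists_common_point hy₁ hy₂ (hu y₁ hy₁) hu₂
  let W := span ℝ {u y₁, u y₂}
  have hW (z : E) (hz : P - z ∉ W) {y : E} (hPy : P - y ∈ W) : z - y ∉ W := fun h =>
    hz (sub_sub_sub_cancel_right P z y ▸ sub_mem hPy h)
  have h₁W : span ℝ {u y₁} ≤ W := span_mono (by simp)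
  have h₂W : span ℝ {u y₂} ≤ W := span_mono (by simp)
  have : FiniteDimensional ℝ W := FiniteDimensional.span_of_finite ℝ (Set.toFinite _)
  have hU : IsOpen (B ∩ {z | P - z ∉ W}) :=
    hB.inter (W.closed_of_finiteDimensional.isOpen_compl.preimage
      (by fun_prop : Continuous (P - ·)))
  refine ⟨1, P, .inl one_ne_zero, LinePassesThrough.of_isOpen hE hcop hu hU inter_subset_left
    (exists_sub_notMem_of_isOpen (span_pair_ne_top_of_two_lt_rank hE _ _) hB ⟨y₁, hy₁⟩ P) ?_⟩
  rintro z ⟨hzB, hz⟩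
  have hz₁ : z - y₁ ∉ W := hW z hz (h₁W hP₁)
  have hz₂ : z - y₂ ∉ W := hW z hz (h₂W hP₂)
  refine .of_two hcop hu hy₁ hy₂ hzB (by simpa [LinePassesThrough] using hP₁)
    (by simpa [LinePassesThrough] using hP₂) (fun h => hz₁ (h₁W h)) (fun h => hz₂ (h₂W h))
    fun heq => ?_
  obtain ⟨s, t, hst⟩ := Submodule.mem_span_pair.1
    (heq ▸ subset_span (by simp) : u y₂ ∈ span ℝ {u y₁, z - y₁})
  have ht : t ≠ 0 := by
    rintro rfl
    exact hu₂ (mem_span_singleton.2 ⟨s, by simpa using hst⟩)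
  have : t • (z - y₁) ∈ W :=
    eq_sub_of_add_eq' hst ▸ sub_mem (subset_span (by simp)) (smul_mem _ _ (subset_span (by simp)))
  exact hz₁ ((smul_mem_iff _ ht).1 this)

theorem exists_forall_eventually_linePassesThrough [T2Space E] (hE : 2 < Module.rank ℝ E)
    (hS : IsConnected S)
    (hloc : ∀ x ∈ S, ∃ B, IsOpen B ∧ x ∈ B ∧ PairwiseCoplanarLines u B ∧ ∀ y ∈ B, u y ≠ 0) :
    ∃ (ε : ℝ) (b : E), (ε ≠ 0 ∨ b ≠ 0) ∧ ∀ x ∈ S, ∀ᶠ z in 𝓝 x, LinePassesThrough u ε b z := by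
  obtain ⟨x, hx⟩ := hS.nonempty
  obtain ⟨B, hB, hxB, hcop, hu⟩ := hloc x hx
  obtain ⟨ε, b, hεb, hb⟩ := hcop.exists_linePassesThrough hE hu hB ⟨x, hxB⟩
  refine ⟨ε, b, hεb, hS.isPreconnected.subset_of_closure_inter_subset
    isOpen_setOfPred_eventually_nhds ⟨x, hx, eventually_of_mem (hB.mem_nhds hxB) hb⟩ ?_⟩
  rintro y ⟨hy, hyS⟩
  obtain ⟨B, hB, hyB, hcop, hu⟩ := hloc y hyS
  obtain ⟨w, hwB, hw⟩ := mem_closure_iff.1 hy B hB hyB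
  obtain ⟨U, hUb, hU, hwU⟩ := eventually_nhds_iff.1 hw
  exact eventually_of_mem (hB.mem_nhds hyB) <| LinePassesThrough.of_isOpen hE hcop hu
    (hB.inter hU) inter_subset_left ⟨w, hwB, hwU⟩ fun z hz => hUb z hz.2

lemma LinePassesThrough.sub_smul_ne_zero [T2Space E] (hE : 1 < Module.rank ℝ E)
    (hu : ContinuousAt u x) (hux : u x ≠ 0) (hεb : ε ≠ 0 ∨ b ≠ 0)
    (h : ∀ᶠ z in 𝓝 x, LinePassesThrough u ε b z) : b - ε • x ≠ 0 := by
  intro hbx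
  have hb : b = ε • x := sub_eq_zero.1 hbx
  have hε : ε ≠ 0 := by
    rintro rfl
    simp [hb] at hεb
  obtain ⟨w, hw⟩ : ∃ w, w ∉ span ℝ {u x} := by
    by_contra! hall
    refine hE.not_ge ?_
    rw [← rank_top ℝ E, ← eq_top_iff'.2 hall]
    exact rank_span_le _ |>.trans (by simp)
  have hw0 : w ≠ 0 := fun h0 => hw (h0 ▸ zero_mem _)
  have hpath : Tendsto (fun t : ℝ => x + t • w) (𝓝[≠] 0) (𝓝 x) :=
    (Continuous.tendsto' (by fun_prop) 0 x (by simp)).mono_left nhdsWithin_le_nhds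
  have huw : ∀ᶠ t : ℝ in 𝓝[≠] 0, u (x + t • w) ∈ span ℝ {w} := by
    filter_upwards [hpath.eventually h, self_mem_nhdsWithin] with t ht ht0
    have hmul : b - ε • (x + t • w) = (-(ε * t)) • w := by
      rw [hb]
      module
    rw [LinePassesThrough, hmul, smul_mem_iff _ (neg_ne_zero.2 (mul_ne_zero hε ht0))] at ht
    exact mem_span_singleton_symm ht hw0
  exact hw (mem_span_singleton_symm ((closed_of_finiteDimensional (span ℝ {w})).mem_of_tendsto
    (hu.tendsto.comp hpath) huw) hux)

end ConcurrentLines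

section KineticLines

open Submodule

variable {N : ℕ} {Ω B : Set (EuclideanSpace ℝ (Fin N))}
  {u : EuclideanSpace ℝ (Fin N) → EuclideanSpace ℝ (Fin N)}

theorem KineticFormulation.pairwiseCoplanarLines (h : KineticFormulation Ω u) (hΩ : IsOpen Ω)
    (hu : ContinuousOn u Ω) (hB : Convex ℝ B) (hBΩ : B ⊆ Ω) : PairwiseCoplanarLines u B :=
  fun _ hy _ hz => mem_span_or_mem_span_pair_of_inner_nonneg fun _ hv hpos =>
    h.inner_nonneg hΩ hu ((hB.segment_subset hy hz).trans hBΩ) hv hpos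

lemma KineticFormulation.exists_isOpen_pairwiseCoplanarLines (h : KineticFormulation Ω u)
    (hΩ : IsOpen Ω) (hu : ContinuousOn u Ω) {x : EuclideanSpace ℝ (Fin N)} (hx : x ∈ Ω)
    (hux : u x ≠ 0) :
    ∃ B, IsOpen B ∧ x ∈ B ∧ PairwiseCoplanarLines u B ∧ ∀ y ∈ B, u y ≠ 0 := by
  obtain ⟨r, hr, hball⟩ := Metric.eventually_nhds_iff_ball.1
    ((hΩ.eventually_mem hx).and ((hu.continuousAt (hΩ.mem_nhds hx)).eventually_ne hux))
  exact ⟨ball x r, isOpen_ball, mem_ball_self hr, h.pairwiseCoplanarLines hΩ hu (convex_ball x r)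
    fun y hy => (hball y hy).1, fun y hy => (hball y hy).2⟩

end KineticLines

section FunctionalDependence

open Submodule

variable {E : Type*} [NormedAddCommGroup E] [NormedSpace ℝ E] {n : WithTop ℕ∞}
  {h ψ : E → ℝ} {x : E}

lemma exists_apply_eq_one {ℓ : StrongDual ℝ E} (hℓ : ℓ ≠ 0) : ∃ e, ℓ e = 1 := by
  obtain ⟨v, hv⟩ := DFunLike.ne_iff.1 hℓ
  exact ⟨(ℓ v)⁻¹ • v, by simpa using inv_mul_cancel₀ hv⟩

lemma eq_of_fderiv_mem_span_singleton {g : E → ℝ} {s : Set E} {ℓ : StrongDual ℝ E} {w₁ w₂ : E}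
    (hs : Convex ℝ s) (hg : ∀ w ∈ s, DifferentiableAt ℝ g w)
    (hspan : ∀ w ∈ s, fderiv ℝ g w ∈ span ℝ {ℓ}) (h₁ : w₁ ∈ s) (h₂ : w₂ ∈ s)
    (hℓ : ℓ w₁ = ℓ w₂) : g w₁ = g w₂ := by
  obtain ⟨c, hc, hmvt⟩ := domain_mvt (fun w hw => (hg w hw).hasFDerivAt.hasFDerivWithinAt) hs h₁ h₂
  obtain ⟨k, hk⟩ := mem_span_singleton.1 (hspan c (hs.segment_subset h₁ h₂ hc))
  rw [← hk, smul_apply, map_sub, hℓ, sub_self, smul_zero] at hmvt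
  exact (sub_eq_zero.1 hmvt).symm

lemma fderiv_comp_mem_span_singleton {σ : E → E} {w : E} (hψ : DifferentiableAt ℝ ψ (σ w))
    (hh : DifferentiableAt ℝ h (σ w)) (hσ : DifferentiableAt ℝ σ w)
    (hspan : fderiv ℝ ψ (σ w) ∈ span ℝ {fderiv ℝ h (σ w)}) :
    fderiv ℝ (ψ ∘ σ) w ∈ span ℝ {fderiv ℝ (h ∘ σ) w} := by
  obtain ⟨c, hc⟩ := mem_span_singleton.1 hspan
  rw [fderiv_comp w hψ hσ, fderiv_comp w hh hσ, ← hc, ContinuousLinearMap.smul_comp]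
  exact smul_mem _ _ (mem_span_singleton_self _)

variable [CompleteSpace E]

lemma eventually_contDiffAt_symm (hn : n ≠ 0) (Φ : OpenPartialHomeomorph E E) (hx : x ∈ Φ.source)
    (hΦ : ∀ᶠ z in 𝓝 x, ContDiffAt ℝ n Φ z) {Φ' : E ≃L[ℝ] E}
    (hΦ' : HasFDerivAt Φ (Φ' : E →L[ℝ] E) x) :
    ∀ᶠ w in 𝓝 (Φ x), ContDiffAt ℝ n Φ.symm w := by
  have hcont : ContinuousAt (fderiv ℝ Φ) x :=
    ((hΦ.self_of_nhds.of_le (ENat.one_le_iff_ne_zero_withTop.2 hn)).fderiv_right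
      (m := 0) (by simp)).continuousAt
  have hinv : ∀ᶠ z in 𝓝 x, ∃ e : E ≃L[ℝ] E, (e : E →L[ℝ] E) = fderiv ℝ Φ z :=
    hcont.eventually (hΦ'.fderiv ▸ Φ'.nhds)
  have hsymm : Tendsto Φ.symm (𝓝 (Φ x)) (𝓝 x) :=
    Φ.tendsto_symm hx
  filter_upwards [hsymm.eventually (hΦ.and hinv), Φ.open_target.mem_nhds (Φ.map_source hx)]
    with w hw hwt
  obtain ⟨hwC, e, he⟩ := hw
  exact Φ.contDiffAt_symm hwt
    (he ▸ (hwC.differentiableAt hn).hasFDerivAt) hwC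

lemma exists_straightening (hn : n ≠ 0) (hh : ∀ᶠ z in 𝓝 x, ContDiffAt ℝ n h z)
    (hx : fderiv ℝ h x ≠ 0) :
    ∃ Φ : OpenPartialHomeomorph E E, x ∈ Φ.source ∧ (∀ z, fderiv ℝ h x (Φ z) = h z) ∧
      ∀ᶠ w in 𝓝 (Φ x), ContDiffAt ℝ n Φ.symm w := by
  obtain ⟨e, he⟩ : ∃ e, fderiv ℝ h x e = 1 := exists_apply_eq_one hx
  let f (z : E) : E := z + (h z - fderiv ℝ h x z) • e
  have hf : ∀ᶠ z in 𝓝 x, ContDiffAt ℝ n f z := hh.mono fun z hz => by fun_prop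
  have hf' : HasFDerivAt f (ContinuousLinearEquiv.refl ℝ E : E →L[ℝ] E) x := by
    have hh' := (hh.self_of_nhds.differentiableAt hn).hasFDerivAt
    exact ((hasFDerivAt_id x).add
      ((hh'.sub (fderiv ℝ h x).hasFDerivAt).smul_const e)).congr_fderiv (by ext; simp)
  have hfx := hf.self_of_nhds
  refine ⟨hfx.toOpenPartialHomeomorph f hf' hn, hfx.mem_toOpenPartialHomeomorph_source hf' hn,
    fun z => ?_, ?_⟩
  · simp [f, he]
  · exact eventually_contDiffAt_symm hn _ (hfx.mem_toOpenPartialHomeomorph_source hf' hn) hf hf'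

/-- In coordinates straightening `h`, the derivative of `ψ` vanishes along the level sets of `h`. -/
theorem exists_eventually_eq_comp_of_fderiv_mem_span (hn : n ≠ 0)
    (hψ : ∀ᶠ z in 𝓝 x, ContDiffAt ℝ n ψ z) (hh : ∀ᶠ z in 𝓝 x, ContDiffAt ℝ n h z)
    (hx : fderiv ℝ h x ≠ 0) (hspan : ∀ᶠ z in 𝓝 x, fderiv ℝ ψ z ∈ span ℝ {fderiv ℝ h z}) :
    ∃ F : ℝ → ℝ, (∀ᶠ t in 𝓝 (h x), ContDiffAt ℝ n F t) ∧ ∀ᶠ z in 𝓝 x, ψ z = F (h z) := by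
  obtain ⟨e, he⟩ : ∃ e, fderiv ℝ h x e = 1 := exists_apply_eq_one hx
  obtain ⟨Φ, hxΦ, hΦh, hΦ⟩ := exists_straightening hn hh hx
  have hsymm : Tendsto Φ.symm (𝓝 (Φ x)) (𝓝 x) := Φ.tendsto_symm hxΦ
  have hg : ∀ᶠ w in 𝓝 (Φ x), ContDiffAt ℝ n (ψ ∘ Φ.symm) w := by
    filter_upwards [hΦ, hsymm.eventually hψ] with w hw hψw using hψw.comp w hw
  have hgspan : ∀ᶠ w in 𝓝 (Φ x), fderiv ℝ (ψ ∘ Φ.symm) w ∈ span ℝ {fderiv ℝ h x} := by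
    filter_upwards [hΦ, hsymm.eventually (hψ.and (hh.and hspan)),
      Φ.open_target.mem_nhds (Φ.map_source hxΦ)] with w hw ⟨hψw, hhw, hspanw⟩ hwt
    have hcomp : h ∘ Φ.symm =ᶠ[𝓝 w] fderiv ℝ h x := by
      filter_upwards [Φ.open_target.mem_nhds hwt] with v hv
      rw [Function.comp_apply, ← hΦh, Φ.right_inv hv]
    simpa only [hcomp.fderiv_eq, ContinuousLinearMap.fderiv] using
      fderiv_comp_mem_span_singleton (hψw.differentiableAt hn) (hhw.differentiableAt hn)
        (hw.differentiableAt hn) hspanw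
  have hline : Tendsto (fun t : ℝ => Φ x + (t - h x) • e) (𝓝 (h x)) (𝓝 (Φ x)) :=
    Continuous.tendsto' (by fun_prop) _ _ (by simp)
  refine ⟨fun t => (ψ ∘ Φ.symm) (Φ x + (t - h x) • e), ?_, ?_⟩
  · filter_upwards [hline.eventually hg] with t ht
    exact ContDiffAt.comp (g := ψ ∘ Φ.symm) t ht (by fun_prop)
  obtain ⟨r, hr, hball⟩ := Metric.eventually_nhds_iff_ball.1 (hg.and hgspan)
  have hhx : Tendsto h (𝓝 x) (𝓝 (h x)) := hh.self_of_nhds.continuousAt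
  filter_upwards [Φ.open_source.mem_nhds hxΦ,
    (Φ.continuousAt hxΦ).eventually_mem (ball_mem_nhds _ hr),
    (hline.comp hhx).eventually_mem (ball_mem_nhds _ hr)] with z hz hz₁ hz₂
  calc ψ z = (ψ ∘ Φ.symm) (Φ z) := by rw [Function.comp_apply, Φ.left_inv hz]
    _ = (ψ ∘ Φ.symm) (Φ x + (h z - h x) • e) :=
      eq_of_fderiv_mem_span_singleton (convex_ball _ r)
        (fun w hw => (hball w hw).1.differentiableAt hn) (fun w hw => (hball w hw).2) hz₁ hz₂
        (by simp [hΦh, he])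

lemma map_nhds_eq_of_fderiv_ne_zero (hn : n ≠ 0) (hh : ContDiffAt ℝ n h x)
    (hx : fderiv ℝ h x ≠ 0) : map h (𝓝 x) = 𝓝 (h x) :=
  (hh.hasStrictFDerivAt hn).map_nhds_eq_of_surj
    (LinearMap.range_eq_top.2 (LinearMap.surjective_of_ne_zero (by exact_mod_cast hx)))

end FunctionalDependence

section Profile

open Submodule

variable {X : Type*} {n : WithTop ℕ∞} {F : ℝ → ℝ} {I : Set ℝ}

/-- `F` is a `C^n` function with nonvanishing derivative on the open interval `I`, represented as an
open order-connected set so that bounded and unbounded intervals are treated alike. -/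
structure IsProfile (n : WithTop ℕ∞) (F : ℝ → ℝ) (I : Set ℝ) : Prop where
  isOpen : IsOpen I
  ordConnected : I.OrdConnected
  contDiffOn : ContDiffOn ℝ n F I
  deriv_ne_zero : ∀ t ∈ I, deriv F t ≠ 0

/-- Eventually along the filter `l`, the function `ψ` is a `C^n` function of `h` with nonvanishing
derivative. The filter is `𝓝 x` for a germ at a point and `𝓝ˢ S` for a neighborhood of a set. -/
def HasProfileAlong (n : WithTop ℕ∞) (ψ h : X → ℝ) (l : Filter X) : Prop :=
  ∃ F I, IsProfile n F I ∧ ∀ᶠ z in l, h z ∈ I ∧ ψ z = F (h z)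

lemma IsProfile.injOn (hF : IsProfile n F I) : InjOn F I := by
  intro s hs t ht hFst
  by_contra hne
  wlog hst : s < t generalizing s t
  · exact this ht hs hFst.symm (Ne.symm hne) ((lt_or_gt_of_ne hne).resolve_left hst)
  have hIcc : Icc s t ⊆ I := hF.ordConnected.out hs ht
  obtain ⟨c, hc, hc0⟩ := exists_deriv_eq_zero hst (hF.contDiffOn.continuousOn.mono hIcc) hFst
  exact hF.deriv_ne_zero c (hIcc (Ioo_subset_Icc_self hc)) hc0

lemma exists_isProfile_ball (hn : n ≠ 0) {t : ℝ} (hF : ∀ᶠ s in 𝓝 t, ContDiffAt ℝ n F s)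
    (ht : deriv F t ≠ 0) : ∃ r > 0, IsProfile n F (ball t r) := by
  have hcont : ContinuousAt (deriv F) t :=
    (hF.self_of_nhds.derivWithin (m := 0) (by simpa [ENat.one_le_iff_ne_zero_withTop])).continuousAt
  obtain ⟨r, hr, hball⟩ := Metric.eventually_nhds_iff_ball.1 (hF.and (hcont.eventually_ne ht))
  exact ⟨r, hr, isOpen_ball, (convex_ball t r).ordConnected,
    fun s hs => (hball s hs).1.contDiffWithinAt, fun s hs => (hball s hs).2⟩

theorem hasProfileAlong_nhds_of_fderiv_mem_span {E : Type*} [NormedAddCommGroup E]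
    [NormedSpace ℝ E] [CompleteSpace E] {ψ h : E → ℝ} {x : E} (hn : n ≠ 0)
    (hψ : ∀ᶠ z in 𝓝 x, ContDiffAt ℝ n ψ z) (hh : ∀ᶠ z in 𝓝 x, ContDiffAt ℝ n h z)
    (hψx : fderiv ℝ ψ x ≠ 0) (hspan : ∀ᶠ z in 𝓝 x, fderiv ℝ ψ z ∈ span ℝ {fderiv ℝ h z}) :
    HasProfileAlong n ψ h (𝓝 x) := by
  have hhx : fderiv ℝ h x ≠ 0 := by
    intro h0
    exact hψx (by simpa [h0] using hspan.self_of_nhds)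
  obtain ⟨F, hF, hψF⟩ := exists_eventually_eq_comp_of_fderiv_mem_span hn hψ hh hhx hspan
  have hdiff : DifferentiableAt ℝ h x := hh.self_of_nhds.differentiableAt hn
  have hF' : deriv F (h x) ≠ 0 := by
    intro h0
    have hψ' : HasFDerivAt (F ∘ h) (deriv F (h x) • fderiv ℝ h x) x :=
      (hF.self_of_nhds.differentiableAt hn).hasDerivAt.comp_hasFDerivAt x hdiff.hasFDerivAt
    exact hψx (by rw [EventuallyEq.fderiv_eq (f := F ∘ h) hψF, hψ'.fderiv, h0, zero_smul])
  obtain ⟨r, hr, hprofile⟩ := exists_isProfile_ball hn hF hF'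
  exact ⟨F, ball (h x) r, hprofile,
    (hdiff.continuousAt.eventually_mem (ball_mem_nhds _ hr)).and hψF⟩

variable [TopologicalSpace X] {ψ h : X → ℝ} {α : ℝ} {x y : X} {S : Set X}

lemma eventually_eq_comp_iff_eventuallyEq {G : ℝ → ℝ} (hmap : map h (𝓝 x) = 𝓝 (h x))
    (hG : ∀ᶠ z in 𝓝 x, ψ z = G (h z)) :
    (∀ᶠ z in 𝓝 x, ψ z = F (h z)) ↔ F =ᶠ[𝓝 (h x)] G := by
  rw [EventuallyEq, ← hmap, eventually_map]
  exact eventually_congr (hG.mono fun z hz => by rw [hz, eq_comm])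

lemma eq_of_forall_hasProfileAlong_nhds (hS : IsPreconnected S) (hα : ∀ x ∈ S, ψ x = α)
    (hprofile : ∀ x ∈ S, HasProfileAlong n ψ h (𝓝 x)) (hx : x ∈ S) (hy : y ∈ S) : h x = h y := by
  refine hS.induction₂ (fun x y => h x = h y) (fun x hx => ?_)
    (fun _ _ _ _ _ _ => Eq.trans) (fun _ _ _ _ => Eq.symm) hx hy
  obtain ⟨F, I, hF, hev⟩ := hprofile x hx
  filter_upwards [mem_nhdsWithin_of_mem_nhds hev, self_mem_nhdsWithin] with y ⟨hyI, hyF⟩ hyS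
  obtain ⟨hxI, hxF⟩ := hev.self_of_nhds
  exact hF.injOn hxI hyI (by rw [← hxF, ← hyF, hα x hx, hα y hyS])

theorem hasProfileAlong_nhdsSet (hS : IsConnected S) (hα : ∀ x ∈ S, ψ x = α)
    (hmap : ∀ x ∈ S, map h (𝓝 x) = 𝓝 (h x))
    (hprofile : ∀ x ∈ S, HasProfileAlong n ψ h (𝓝 x)) : HasProfileAlong n ψ h (𝓝ˢ S) := by
  obtain ⟨x, hx⟩ := hS.nonempty
  obtain ⟨F, I, hF, hev⟩ := hprofile x hx
  refine ⟨F, I, hF, eventually_nhdsSet_iff_forall.2 fun y hy => ?_⟩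
  have hhxy := eq_of_forall_hasProfileAlong_nhds hS.isPreconnected hα hprofile hx hy
  have hI : ∀ᶠ z in 𝓝 y, h z ∈ I :=
    Tendsto.eventually_mem (hmap y hy).le (hF.isOpen.mem_nhds (hhxy ▸ hev.self_of_nhds.1))
  refine hI.and ?_
  let P (x y : X) := ∀ F : ℝ → ℝ, (∀ᶠ z in 𝓝 x, ψ z = F (h z)) ↔ ∀ᶠ z in 𝓝 y, ψ z = F (h z)
  suffices P x y from (this F).1 (hev.mono fun _ => And.right)
  refine hS.isPreconnected.induction₂ P (fun x hx => ?_)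
    (fun _ _ _ _ _ _ h₁ h₂ F => (h₁ F).trans (h₂ F)) (fun _ _ _ _ h₁ F => (h₁ F).symm) hx hy
  obtain ⟨G, _, _, hG⟩ := hprofile x hx
  filter_upwards [mem_nhdsWithin_of_mem_nhds hG.eventually_nhds, self_mem_nhdsWithin] with y hGy hyS
  intro F
  rw [eventually_eq_comp_iff_eventuallyEq (hmap x hx) (hG.mono fun _ => And.right),
    eventually_eq_comp_iff_eventuallyEq (hmap y hyS) (hGy.mono fun _ => And.right),
    eq_of_forall_hasProfileAlong_nhds hS.isPreconnected hα hprofile hx hyS]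

lemma HasProfileAlong.exists_isOpen {Ω : Set X} (hprofile : HasProfileAlong n ψ h (𝓝ˢ S))
    (hΩ : Ω ∈ 𝓝ˢ S) : ∃ ω, IsOpen ω ∧ S ⊆ ω ∧ ω ⊆ Ω ∧
      ∃ F I, IsProfile n F I ∧ ∀ x ∈ ω, h x ∈ I ∧ ψ x = F (h x) := by
  obtain ⟨F, I, hF, hev⟩ := hprofile
  obtain ⟨ω, hω, hSω, hωsub⟩ := mem_nhdsSet_iff_exists.1 (inter_mem hΩ hev)
  exact ⟨ω, hω, hSω, fun x hx => (hωsub hx).1, F, I, hF, fun x hx => (hωsub hx).2⟩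

end Profile

section HilbertSpace

open Submodule InnerProductSpace

variable {E : Type*} [NormedAddCommGroup E] [InnerProductSpace ℝ E] [CompleteSpace E]
  {n : WithTop ℕ∞} {ψ h : E → ℝ} {α ε : ℝ} {b x P : E} {S : Set E}

lemma fderiv_mem_span_singleton_iff_gradient :
    fderiv ℝ ψ x ∈ span ℝ {fderiv ℝ h x} ↔ gradient ψ x ∈ span ℝ {gradient h x} := by
  simp only [mem_span_singleton, ← toDual_gradient]
  refine exists_congr fun c => ?_
  rw [← (toDual ℝ E).injective.eq_iff, LinearIsometryEquiv.map_smulₛₗ, RCLike.conj_to_real]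

lemma hasGradientAt_inner_left (ξ x : E) : HasGradientAt (fun z => ⟪z, ξ⟫) ξ x := by
  rw [hasGradientAt_iff_hasFDerivAt]
  exact (toDual ℝ E ξ).hasFDerivAt.congr_of_eventuallyEq
    (.of_forall fun z => by simp [real_inner_comm])

lemma hasGradientAt_dist (hx : x ≠ P) :
    HasGradientAt (fun z => dist z P) ((dist x P)⁻¹ • (x - P)) x := by
  have hsq : HasFDerivAt (fun z => ‖z - P‖ ^ 2) (2 • innerSL ℝ (x - P)) x := by
    simpa using ((hasFDerivAt_id x).sub_const P).norm_sq
  have hsqrt := hsq.sqrt (pow_ne_zero 2 (norm_ne_zero_iff.2 (sub_ne_zero.2 hx)))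
  simp only [← dist_eq_norm, Real.sqrt_sq dist_nonneg] at hsqrt
  rw [hasGradientAt_iff_hasFDerivAt]
  refine hsqrt.congr_fderiv ?_
  ext v
  simp only [one_div, mul_inv_rev, map_sub, smul_apply, sub_apply, coe_innerSL_apply, nsmul_eq_mul,
    Nat.cast_ofNat, smul_eq_mul, map_smul, toDual_apply_apply]
  ring

lemma continuousAt_gradient (hn : n ≠ 0) (hψ : ContDiffAt ℝ n ψ x) :
    ContinuousAt (gradient ψ) x :=
  (toDual ℝ E).symm.continuous.continuousAt.comp ((hψ.of_le
    (ENat.one_le_iff_ne_zero_withTop.2 hn)).fderiv_right (m := 0) (by simp)).continuousAt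

theorem hasProfileAlong_nhdsSet_of_gradient_mem_span (hn : n ≠ 0) (hS : IsConnected S)
    (hα : ∀ x ∈ S, ψ x = α) (hψ : ∀ x ∈ S, ∀ᶠ z in 𝓝 x, ContDiffAt ℝ n ψ z)
    (hψ' : ∀ x ∈ S, gradient ψ x ≠ 0) (hh : ∀ x ∈ S, ∀ᶠ z in 𝓝 x, ContDiffAt ℝ n h z)
    (hspan : ∀ x ∈ S, ∀ᶠ z in 𝓝 x, gradient ψ z ∈ span ℝ {gradient h z}) :
    HasProfileAlong n ψ h (𝓝ˢ S) := by
  simp only [← fderiv_mem_span_singleton_iff_gradient] at hspan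
  have hψ0 (x) (hx : x ∈ S) : fderiv ℝ ψ x ≠ 0 := by
    rw [← toDual_gradient, map_ne_zero_iff _ (toDual ℝ E).injective]
    exact hψ' x hx
  have hh0 (x) (hx : x ∈ S) : fderiv ℝ h x ≠ 0 := fun h0 =>
    hψ0 x hx (by simpa [h0] using (hspan x hx).self_of_nhds)
  exact hasProfileAlong_nhdsSet hS hα
    (fun x hx => map_nhds_eq_of_fderiv_ne_zero hn (hh x hx).self_of_nhds (hh0 x hx))
    fun x hx => hasProfileAlong_nhds_of_fderiv_mem_span hn (hψ x hx) (hh x hx) (hψ0 x hx)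
      (hspan x hx)

lemma LinePassesThrough.gradient_mem_span_gradient_inner (hb : b ≠ 0)
    (h : LinePassesThrough (gradient ψ) 0 b x) :
    gradient ψ x ∈ span ℝ {gradient (fun z => ⟪z, ‖b‖⁻¹ • b⟫) x} := by
  rw [(hasGradientAt_inner_left _ x).gradient, span_singleton_smul_eq (by simpa using hb)]
  exact mem_span_singleton_symm (by simpa [LinePassesThrough] using h) hb

lemma LinePassesThrough.gradient_mem_span_gradient_dist (hε : ε ≠ 0) (hx : x ≠ ε⁻¹ • b)
    (h : LinePassesThrough (gradient ψ) ε b x) :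
    gradient ψ x ∈ span ℝ {gradient (fun z => dist z (ε⁻¹ • b)) x} := by
  have hbx : x - ε⁻¹ • b = (-ε⁻¹) • (b - ε • x) := by
    match_scalars <;> field_simp
  rw [(hasGradientAt_dist hx).gradient, span_singleton_smul_eq (by simpa [sub_eq_zero] using hx)]
  exact mem_span_singleton_symm (hbx ▸ smul_mem _ _ h) (sub_ne_zero.2 hx)

theorem hasProfileAlong_dist_or_inner (hE : 1 < Module.rank ℝ E) (hn : n ≠ 0)
    (hS : IsConnected S) (hα : ∀ x ∈ S, ψ x = α) (hψ : ∀ x ∈ S, ∀ᶠ z in 𝓝 x, ContDiffAt ℝ n ψ z)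
    (hψ' : ∀ x ∈ S, gradient ψ x ≠ 0) (hεb : ε ≠ 0 ∨ b ≠ 0)
    (hlines : ∀ x ∈ S, ∀ᶠ z in 𝓝 x, LinePassesThrough (gradient ψ) ε b z) :
    (∃ P, HasProfileAlong n ψ (fun z => dist z P) (𝓝ˢ S)) ∨
      ∃ ξ, ‖ξ‖ = 1 ∧ HasProfileAlong n ψ (fun z => ⟪z, ξ⟫) (𝓝ˢ S) := by
  rcases eq_or_ne ε 0 with rfl | hε
  · have hb : b ≠ 0 := hεb.resolve_left (not_not_intro rfl)
    exact .inr ⟨‖b‖⁻¹ • b, norm_smul_inv_norm (𝕜 := ℝ) hb,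
      hasProfileAlong_nhdsSet_of_gradient_mem_span hn hS hα hψ hψ'
        (fun x _ => .of_forall fun z => contDiffAt_id.inner ℝ contDiffAt_const)
        fun x hx => (hlines x hx).mono fun z hz => hz.gradient_mem_span_gradient_inner hb⟩
  · have hne (x) (hx : x ∈ S) : ∀ᶠ z in 𝓝 x, z ≠ ε⁻¹ • b := by
      refine eventually_ne_nhds fun hxb => LinePassesThrough.sub_smul_ne_zero hE
        (continuousAt_gradient hn (hψ x hx).self_of_nhds) (hψ' x hx) hεb (hlines x hx) ?_
      rw [hxb, smul_inv_smul₀ hε, sub_self]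
    exact .inl ⟨ε⁻¹ • b, hasProfileAlong_nhdsSet_of_gradient_mem_span hn hS hα hψ hψ'
      (fun x hx => (hne x hx).mono fun z hz => contDiffAt_id.dist ℝ contDiffAt_const hz)
      fun x hx => ((hlines x hx).and (hne x hx)).mono fun z hz =>
        hz.1.gradient_mem_span_gradient_dist hε hz.2⟩

end HilbertSpace

theorem stream_function_radial_or_affine_general {N : ℕ} (hN : 3 ≤ N)
    {Ω : Set (EuclideanSpace ℝ (Fin N))} (hΩ : IsOpen Ω) {ψ : EuclideanSpace ℝ (Fin N) → ℝ}
    {n : WithTop ℕ∞} (hn : n ≠ 0) (hψ : ContDiffOn ℝ n ψ Ω)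
    (hkin : KineticFormulation Ω (gradient ψ)) {α : ℝ} {S : Set (EuclideanSpace ℝ (Fin N))}
    (hS : IsConnected S) (hSΩ : S ⊆ Ω) (hα : ∀ x ∈ S, ψ x = α) (hnv : ∀ x ∈ S, gradient ψ x ≠ 0) :
    ∃ ω : Set (EuclideanSpace ℝ (Fin N)), IsOpen ω ∧ S ⊆ ω ∧ ω ⊆ Ω ∧
      ∃ I : Set ℝ, IsOpen I ∧ I.OrdConnected ∧
        ∃ F : ℝ → ℝ, ContDiffOn ℝ n F I ∧ (∀ t ∈ I, deriv F t ≠ 0) ∧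
          ((∃ P : EuclideanSpace ℝ (Fin N),
              ∀ x ∈ ω, dist x P ∈ I ∧ ψ x = F (dist x P)) ∨
           (∃ ξ : EuclideanSpace ℝ (Fin N), ‖ξ‖ = 1 ∧
              ∀ x ∈ ω, ⟪x, ξ⟫ ∈ I ∧ ψ x = F ⟪x, ξ⟫)) := by
  have hrank : 2 < Module.rank ℝ (EuclideanSpace ℝ (Fin N)) := by
    rw [rank_eq_card_basis (EuclideanSpace.basisFun (Fin N) ℝ).toBasis, Fintype.card_fin]
    exact_mod_cast hN
  have hψat (x) (hx : x ∈ Ω) : ContDiffAt ℝ n ψ x := hψ.contDiffAt (hΩ.mem_nhds hx)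
  have hgrad : ContinuousOn (gradient ψ) Ω := fun x hx =>
    (continuousAt_gradient hn (hψat x hx)).continuousWithinAt
  obtain ⟨ε, b, hεb, hlines⟩ := exists_forall_eventually_linePassesThrough hrank hS fun x hx =>
    hkin.exists_isOpen_pairwiseCoplanarLines hΩ hgrad (hSΩ hx) (hnv x hx)
  have hΩS : Ω ∈ 𝓝ˢ S := hΩ.mem_nhdsSet.2 hSΩ
  rcases hasProfileAlong_dist_or_inner (Cardinal.one_lt_two.trans hrank) hn hS hα
    (fun x hx => (hΩ.eventually_mem (hSΩ hx)).mono hψat) hnv hεb hlines with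
    ⟨P, hP⟩ | ⟨ξ, hξ, hprofile⟩
  · obtain ⟨ω, hω, hSω, hωΩ, F, I, hF, hψF⟩ := hP.exists_isOpen hΩS
    exact ⟨ω, hω, hSω, hωΩ, I, hF.isOpen, hF.ordConnected, F, hF.contDiffOn, hF.deriv_ne_zero,
      .inl ⟨P, hψF⟩⟩
  · obtain ⟨ω, hω, hSω, hωΩ, F, I, hF, hψF⟩ := hprofile.exists_isOpen hΩS
    exact ⟨ω, hω, hSω, hωΩ, I, hF.isOpen, hF.ordConnected, F, hF.contDiffOn, hF.deriv_ne_zero,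
      .inr ⟨ξ, hξ, hψF⟩⟩

theorem stream_function_radial_or_affine (N : ℕ) (hN : 3 ≤ N)
    (Ω : Set (EuclideanSpace ℝ (Fin N))) (hΩ : IsOpen Ω)
    (ψ : EuclideanSpace ℝ (Fin N) → ℝ) (hψ : ContDiffOn ℝ (⊤ : ℕ∞) ψ Ω)
    (hkin : KineticFormulation Ω (fun x => gradient ψ x))
    (α : ℝ) (hnv : ∀ x ∈ Ω, ψ x = α → gradient ψ x ≠ 0)
    (S : Set (EuclideanSpace ℝ (Fin N))) (x₀ : EuclideanSpace ℝ (Fin N))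
    (hx₀ : x₀ ∈ {x ∈ Ω | ψ x = α})
    (hS : S = connectedComponentIn {x ∈ Ω | ψ x = α} x₀) :
    ∃ ω : Set (EuclideanSpace ℝ (Fin N)), IsOpen ω ∧ S ⊆ ω ∧ ω ⊆ Ω ∧
      ∃ I : Set ℝ, IsOpen I ∧ I.OrdConnected ∧
        ∃ F : ℝ → ℝ, ContDiffOn ℝ (⊤ : ℕ∞) F I ∧ (∀ t ∈ I, deriv F t ≠ 0) ∧
          ((∃ P : EuclideanSpace ℝ (Fin N),
              ∀ x ∈ ω, dist x P ∈ I ∧ ψ x = F (dist x P)) ∨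
           (∃ ξ : EuclideanSpace ℝ (Fin N), ‖ξ‖ = 1 ∧
              ∀ x ∈ ω, ⟪x, ξ⟫ ∈ I ∧ ψ x = F ⟪x, ξ⟫)) := by
  subst hS
  have hsub := connectedComponentIn_subset {x ∈ Ω | ψ x = α} x₀
  exact stream_function_radial_or_affine_general hN hΩ (by simp) hψ hkin
    ⟨⟨x₀, mem_connectedComponentIn hx₀⟩, isPreconnected_connectedComponentIn⟩
    (fun x hx => (hsub hx).1) (fun x hx => (hsub hx).2)
    fun x hx => hnv x (hsub hx).1 (hsub hx).2
end
end
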